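/- Let k ≥ 1 and let M be a k×k matrix all of whose entries are positive integers, satisfying M² = 3M. Then M is one of the following matrices: the 1×1 matrix (3); the 2×2 matrices [[2,1],[2,1]], [[2,2],[1,1]], [[1,1],[2,2]], [[1,2],[1,2]]; or the 3×3 matrix all of whose entries are 1. -/

import Mathlib

/-- Any square matrix `M` with positive integer entries satisfying `M² = 3M` is one of
`(3)`, `[[2,1],[2,1]]`, `[[2,2],[1,1]]`, `[[1,1],[2,2]]`, `[[1,2],[1,2]]`, or the `3×3`
all-ones matrix. -/
theorem integer_matrices_sq_eq_three_mul (k : ℕ) (hk : 1 ≤ k)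
    (M : Matrix (Fin k) (Fin k) ℤ)
    (hpos : ∀ i j, 1 ≤ M i j)
    (hM : M * M = (3 : ℤ) • M) :
    (∃ h : k = 1, Matrix.reindex (finCongr h) (finCongr h) M = !![3]) ∨
    (∃ h : k = 2, Matrix.reindex (finCongr h) (finCongr h) M = !![2, 1; 2, 1]) ∨
    (∃ h : k = 2, Matrix.reindex (finCongr h) (finCongr h) M = !![2, 2; 1, 1]) ∨
    (∃ h : k = 2, Matrix.reindex (finCongr h) (finCongr h) M = !![1, 1; 2, 2]) ∨
    (∃ h : k = 2, Matrix.reindex (finCongr h) (finCongr h) M = !![1, 2; 1, 2]) ∨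
    (∃ h : k = 3, Matrix.reindex (finCongr h) (finCongr h) M =
      !![1, 1, 1; 1, 1, 1; 1, 1, 1]) := by
  have key : ∀ i j, ∑ l, M i l * M l j = 3 * M i j := by
    intro i j
    have := congrFun (congrFun hM i) j
    simpa [Matrix.mul_apply] using this
  have hmin : ∀ j, ∃ i, (∀ l, M i j ≤ M l j) ∧ ∑ l, M l j ≤ 3 * M i j := by
    intro j
    obtain ⟨i, -, hi⟩ := Finset.exists_min_image (Finset.univ : Finset (Fin k))
      (fun l => M l j) ⟨⟨0, hk⟩, Finset.mem_univ _⟩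
    refine ⟨i, fun l => hi l (Finset.mem_univ _), ?_⟩
    rw [← key i j]
    apply Finset.sum_le_sum
    intro l _
    nlinarith [hpos i l, hpos l j]
  have hk3 : k ≤ 3 := by
    obtain ⟨i, h1, h2⟩ := hmin ⟨0, hk⟩
    have h3 : ∑ l : Fin k, M i ⟨0, hk⟩ ≤ ∑ l, M l ⟨0, hk⟩ :=
      Finset.sum_le_sum (fun l _ => h1 l)
    simp only [Finset.sum_const, Finset.card_univ, Fintype.card_fin, nsmul_eq_mul] at h3
    have h4 := hpos i ⟨0, hk⟩
    have : (k : ℤ) ≤ 3 := by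
      by_contra hc
      push Not at hc
      nlinarith
    exact_mod_cast this
  clear hM
  interval_cases k
  · left
    refine ⟨rfl, ?_⟩
    have h := key 0 0
    simp only [Fin.sum_univ_one] at h
    have h0 := hpos 0 0
    have : M 0 0 = 3 := by
      have : M 0 0 * (M 0 0 - 3) = 0 := by linarith
      rcases mul_eq_zero.1 this with h | h <;> linarith
    ext i j
    fin_cases i; fin_cases j
    simpa using this
  · have e00 := key 0 0
    have e01 := key 0 1
    simp only [Fin.sum_univ_two] at e00 e01
    have p00 := hpos 0 0
    have p01 := hpos 0 1
    have p10 := hpos 1 0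
    have p11 := hpos 1 1
    have tr : M 0 0 + M 1 1 = 3 := by
      have : M 0 1 * (M 0 0 + M 1 1 - 3) = 0 := by linarith
      rcases mul_eq_zero.1 this with h | h <;> linarith
    have fin : ∀ a b c d : ℤ, M 0 0 = a → M 0 1 = b → M 1 0 = c → M 1 1 = d →
        Matrix.reindex (finCongr (rfl : 2 = 2)) (finCongr (rfl : 2 = 2)) M = !![a, b; c, d] := by
      intro a b c d h1 h2 h3 h4
      ext i j
      fin_cases i <;> fin_cases j <;> simpa
    have ha : M 0 0 = 1 ∨ M 0 0 = 2 := by omega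
    have hbc : M 0 1 * M 1 0 = 2 := by
      rcases ha with h | h <;> rw [h] at e00 <;> linarith
    have hb : M 0 1 ≤ 2 := by nlinarith
    have hb' : M 0 1 = 1 ∨ M 0 1 = 2 := by omega
    right
    rcases ha with h | h <;> rcases hb' with h' | h' <;> rw [h'] at hbc
    · exact Or.inr (Or.inr (Or.inl ⟨rfl, fin _ _ _ _ h h' (by linarith) (by linarith)⟩))
    · exact Or.inr (Or.inr (Or.inr (Or.inl ⟨rfl, fin _ _ _ _ h h' (by linarith) (by linarith)⟩)))
    · exact Or.inl ⟨rfl, fin _ _ _ _ h h' (by linarith) (by linarith)⟩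
    · exact Or.inr (Or.inl ⟨rfl, fin _ _ _ _ h h' (by linarith) (by linarith)⟩)
  · have hc : ∀ j l, M l j = M 0 j := by
      intro j
      obtain ⟨i, h1, h2⟩ := hmin j
      simp only [Fin.sum_univ_three] at h2
      have a0 := h1 0
      have a1 := h1 1
      have a2 := h1 2
      intro l
      fin_cases l <;> simp <;> linarith
    have e := key 0 0
    simp only [Fin.sum_univ_three] at e
    rw [hc 0 1, hc 0 2] at e
    have p0 := hpos 0 0
    have p1 := hpos 0 1
    have p2 := hpos 0 2
    have tr : M 0 0 + M 0 1 + M 0 2 = 3 := by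
      have : M 0 0 * (M 0 0 + M 0 1 + M 0 2 - 3) = 0 := by linarith
      rcases mul_eq_zero.1 this with h | h <;> linarith
    have one : ∀ l j, M l j = 1 := by
      intro l j
      rw [hc]
      fin_cases j <;> simp <;> linarith
    refine Or.inr (Or.inr (Or.inr (Or.inr (Or.inr ⟨rfl, ?_⟩))))
    ext i j
    fin_cases i <;> fin_cases j <;> simp [one]
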